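/- Let k_z < K_r, K² = K_r² − k_z², and F smooth with F_ss + F_yy + K_r² F = 0. Then p = cosh(k_z z)·F(x−Vt,y) + (β(cos(Kz)M − 1)/K² − V)·y satisfies the Charney–Obukhov equation for any constant M, and the boundary operator B[p] = p_{zt} − p_y p_{zx} + p_x p_{zy} equals −(∂_x F)(x−Vt,y)·(β/K²)·(sinh(k_z z)k_z cos(Kz)M − sinh(k_z z)k_z + cosh(k_z z)K sin(Kz)M). -/

import Mathlib

open Real

noncomputable section

/-- Partial derivative in `t` of `p t x y z`. -/
def pdt (p : ℝ → ℝ → ℝ → ℝ → ℝ) (t x y z : ℝ) : ℝ := deriv (fun t' => p t' x y z) t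
/-- Partial derivative in `x`. -/
def pdx (p : ℝ → ℝ → ℝ → ℝ → ℝ) (t x y z : ℝ) : ℝ := deriv (fun x' => p t x' y z) x
/-- Partial derivative in `y`. -/
def pdy (p : ℝ → ℝ → ℝ → ℝ → ℝ) (t x y z : ℝ) : ℝ := deriv (fun y' => p t x y' z) y
/-- Partial derivative in `z`. -/
def pdz (p : ℝ → ℝ → ℝ → ℝ → ℝ) (t x y z : ℝ) : ℝ := deriv (fun z' => p t x y z') z

/-- Spatial Laplacian in `(x, y, z)`. -/
def lap3d (p : ℝ → ℝ → ℝ → ℝ → ℝ) (t x y z : ℝ) : ℝ :=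
  pdx (pdx p) t x y z + pdy (pdy p) t x y z + pdz (pdz p) t x y z

/-- Charney–Obukhov operator. -/
def CO (β : ℝ) (p : ℝ → ℝ → ℝ → ℝ → ℝ) (t x y z : ℝ) : ℝ :=
  pdt (lap3d p) t x y z + pdx p t x y z * pdy (lap3d p) t x y z
    - pdy p t x y z * pdx (lap3d p) t x y z + β * pdx p t x y z

/-- Boundary condition operator `p_{zt} − p_y p_{zx} + p_x p_{zy}`. -/
def Bop (p : ℝ → ℝ → ℝ → ℝ → ℝ) (t x y z : ℝ) : ℝ :=
  pdt (pdz p) t x y z - pdy p t x y z * pdx (pdz p) t x y z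
    + pdx p t x y z * pdy (pdz p) t x y z

/-- Partial derivative in the first variable `s` of a two-variable function. -/
def dS (F : ℝ → ℝ → ℝ) (s y : ℝ) : ℝ := deriv (fun s' => F s' y) s
/-- Partial derivative in the second variable `y` of a two-variable function. -/
def dY (F : ℝ → ℝ → ℝ) (s y : ℝ) : ℝ := deriv (fun y' => F s y') y

/-- Smoothness of a two-variable function. -/
def Smooth2 (F : ℝ → ℝ → ℝ) : Prop := ContDiff ℝ (⊤ : ℕ∞) (fun q : ℝ × ℝ => F q.1 q.2)

theorem aux_S {F : ℝ → ℝ → ℝ} (hF : Smooth2 F) (s y : ℝ) :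
    HasDerivAt (fun s' => F s' y) (dS F s y) s := by
  have h : Differentiable ℝ (fun q : ℝ × ℝ => F q.1 q.2) := ContDiff.differentiable hF (by simp)
  have h2 : Differentiable ℝ (fun s' : ℝ => F s' y) :=
    h.comp (f := fun s' : ℝ => (s', y)) (by fun_prop)
  exact (h2 s).hasDerivAt

theorem aux_Y {F : ℝ → ℝ → ℝ} (hF : Smooth2 F) (s y : ℝ) :
    HasDerivAt (fun y' => F s y') (dY F s y) y := by
  have h : Differentiable ℝ (fun q : ℝ × ℝ => F q.1 q.2) := ContDiff.differentiable hF (by simp)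
  have h2 : Differentiable ℝ (fun y' : ℝ => F s y') :=
    h.comp (f := fun y' : ℝ => (s, y')) (by fun_prop)
  exact (h2 y).hasDerivAt

theorem aux_smooth_S {F : ℝ → ℝ → ℝ} (hF : Smooth2 F) : Smooth2 (dS F) := by
  have e : (fun q : ℝ × ℝ => dS F q.1 q.2) =
      fun q : ℝ × ℝ => fderiv ℝ (fun q : ℝ × ℝ => F q.1 q.2) q (1, 0) := by
    funext q
    have h : Differentiable ℝ (fun q : ℝ × ℝ => F q.1 q.2) := ContDiff.differentiable hF (by simp)
    have h1 : HasDerivAt (fun s' : ℝ => (s', q.2)) ((1 : ℝ), (0 : ℝ)) q.1 :=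
      (hasDerivAt_id q.1).prodMk (hasDerivAt_const q.1 q.2)
    exact (((h q).hasFDerivAt).comp_hasDerivAt q.1 h1).deriv
  unfold Smooth2 at *
  rw [e]
  exact (hF.fderiv_right (m := (⊤ : ℕ∞)) (by simp)).clm_apply contDiff_const

theorem aux_smooth_Y {F : ℝ → ℝ → ℝ} (hF : Smooth2 F) : Smooth2 (dY F) := by
  have e : (fun q : ℝ × ℝ => dY F q.1 q.2) =
      fun q : ℝ × ℝ => fderiv ℝ (fun q : ℝ × ℝ => F q.1 q.2) q (0, 1) := by
    funext q
    have h : Differentiable ℝ (fun q : ℝ × ℝ => F q.1 q.2) := ContDiff.differentiable hF (by simp)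
    have h1 : HasDerivAt (fun y' : ℝ => (q.1, y')) ((0 : ℝ), (1 : ℝ)) q.2 :=
      (hasDerivAt_const q.2 q.1).prodMk (hasDerivAt_id q.2)
    exact (((h q).hasFDerivAt).comp_hasDerivAt q.2 h1).deriv
  unfold Smooth2 at *
  rw [e]
  exact (hF.fderiv_right (m := (⊤ : ℕ∞)) (by simp)).clm_apply contDiff_const

/-- All first derivatives of `a z * F (x - V t) y + g z * y`. -/
theorem aux_t {F : ℝ → ℝ → ℝ} (hF : Smooth2 F) (a g : ℝ → ℝ) (V : ℝ) :
    pdt (fun t x y z => a z * F (x - V * t) y + g z * y) =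
      fun t x y z => -V * a z * dS F (x - V * t) y := by
  funext t x y z
  have h1 : HasDerivAt (fun t' : ℝ => x - V * t') (-V) t := by
    simpa using ((hasDerivAt_id t).const_mul V).const_sub x
  have h := ((((aux_S hF (x - V * t) y).comp t h1).const_mul (a z)).add_const (g z * y)).deriv
  refine Eq.trans h ?_
  ring

theorem aux_x {F : ℝ → ℝ → ℝ} (hF : Smooth2 F) (a g : ℝ → ℝ) (V : ℝ) :
    pdx (fun t x y z => a z * F (x - V * t) y + g z * y) =
      fun t x y z => a z * dS F (x - V * t) y := by
  funext t x y z
  have h1 : HasDerivAt (fun x' : ℝ => x' - V * t) 1 x := (hasDerivAt_id x).sub_const _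
  have h := ((((aux_S hF (x - V * t) y).comp x h1).const_mul (a z)).add_const (g z * y)).deriv
  refine Eq.trans h ?_
  ring

theorem aux_y {F : ℝ → ℝ → ℝ} (hF : Smooth2 F) (a g : ℝ → ℝ) (V : ℝ) :
    pdy (fun t x y z => a z * F (x - V * t) y + g z * y) =
      fun t x y z => a z * dY F (x - V * t) y + g z := by
  funext t x y z
  have h := (((aux_Y hF (x - V * t) y).const_mul (a z)).add
    ((hasDerivAt_id y).const_mul (g z))).deriv
  refine Eq.trans h ?_
  ring

theorem aux_z (F : ℝ → ℝ → ℝ) (a g a' g' : ℝ → ℝ) (V : ℝ)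
    (ha : ∀ z, HasDerivAt a (a' z) z) (hg : ∀ z, HasDerivAt g (g' z) z) :
    pdz (fun t x y z => a z * F (x - V * t) y + g z * y) =
      fun t x y z => a' z * F (x - V * t) y + g' z * y := by
  funext t x y z
  exact (((ha z).mul_const (F (x - V * t) y)).add ((hg z).mul_const y)).deriv

theorem aux_xx {F : ℝ → ℝ → ℝ} (hF : Smooth2 F) (a g : ℝ → ℝ) (V : ℝ) :
    pdx (pdx (fun t x y z => a z * F (x - V * t) y + g z * y)) =
      fun t x y z => a z * dS (dS F) (x - V * t) y := by
  rw [aux_x hF]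
  have h := aux_x (aux_smooth_S hF) a (fun _ => 0) V
  simpa using h

theorem aux_yy {F : ℝ → ℝ → ℝ} (hF : Smooth2 F) (a g : ℝ → ℝ) (V : ℝ) :
    pdy (pdy (fun t x y z => a z * F (x - V * t) y + g z * y)) =
      fun t x y z => a z * dY (dY F) (x - V * t) y := by
  rw [aux_y hF]
  funext t x y z
  exact (((aux_Y (aux_smooth_Y hF) (x - V * t) y).const_mul (a z)).add_const (g z)).deriv

/-- Solution 7 satisfies the Charney–Obukhov equation, and
the boundary operator on it. -/
theorem stmt_13 (F : ℝ → ℝ → ℝ) (kz Kr K V β M : ℝ)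
    (hkz0 : 0 < kz) (hkz : kz < Kr) (hK : K ^ 2 = Kr ^ 2 - kz ^ 2) (hK0 : K ≠ 0)
    (hF : Smooth2 F)
    (hHelm : ∀ s y, dS (dS F) s y + dY (dY F) s y + Kr ^ 2 * F s y = 0) :
    (∀ t x y z, CO β
      (fun t x y z => Real.cosh (kz * z) * F (x - V * t) y
        + (β * (Real.cos (K * z) * M - 1) / K ^ 2 - V) * y)
      t x y z = 0) ∧
    (∀ t x y z, Bop
      (fun t x y z => Real.cosh (kz * z) * F (x - V * t) y
        + (β * (Real.cos (K * z) * M - 1) / K ^ 2 - V) * y)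
      t x y z = -(dS F (x - V * t) y) * (β / K ^ 2)
        * (Real.sinh (kz * z) * kz * Real.cos (K * z) * M
          - Real.sinh (kz * z) * kz
          + Real.cosh (kz * z) * K * Real.sin (K * z) * M)) := by
  have hc : ∀ z, HasDerivAt (fun z => Real.cosh (kz * z)) (kz * Real.sinh (kz * z)) z := by
    intro z
    have h1 : HasDerivAt (fun z : ℝ => kz * z) kz z := by
      simpa using (hasDerivAt_id z).const_mul kz
    simpa [mul_comm] using h1.cosh
  have hs : ∀ z, HasDerivAt (fun z => kz * Real.sinh (kz * z)) (kz ^ 2 * Real.cosh (kz * z)) z := by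
    intro z
    have h1 : HasDerivAt (fun z : ℝ => kz * z) kz z := by
      simpa using (hasDerivAt_id z).const_mul kz
    refine (h1.sinh.const_mul kz).congr_deriv ?_
    ring
  have hg : ∀ z, HasDerivAt (fun z => β * (Real.cos (K * z) * M - 1) / K ^ 2 - V)
      (-(β * M / K * Real.sin (K * z))) z := by
    intro z
    have h1 : HasDerivAt (fun z : ℝ => K * z) K z := by
      simpa using (hasDerivAt_id z).const_mul K
    refine ((((((h1.cos).mul_const M).sub_const 1).const_mul β).div_const (K ^ 2)).sub_const
      V).congr_deriv ?_
    field_simp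
  have hg' : ∀ z, HasDerivAt (fun z => -(β * M / K * Real.sin (K * z)))
      (-(β * M * Real.cos (K * z))) z := by
    intro z
    have h1 : HasDerivAt (fun z : ℝ => K * z) K z := by
      simpa using (hasDerivAt_id z).const_mul K
    refine ((h1.sin).const_mul (β * M / K)).neg.congr_deriv ?_
    field_simp
  have ez := aux_z F _ _ _ _ V hc hg
  have ezz := aux_z F _ _ _ _ V hs hg'
  have ex := aux_x hF (fun z => Real.cosh (kz * z))
    (fun z => β * (Real.cos (K * z) * M - 1) / K ^ 2 - V) V
  have ey := aux_y hF (fun z => Real.cosh (kz * z))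
    (fun z => β * (Real.cos (K * z) * M - 1) / K ^ 2 - V) V
  have exx := aux_xx hF (fun z => Real.cosh (kz * z))
    (fun z => β * (Real.cos (K * z) * M - 1) / K ^ 2 - V) V
  have eyy := aux_yy hF (fun z => Real.cosh (kz * z))
    (fun z => β * (Real.cos (K * z) * M - 1) / K ^ 2 - V) V
  have el : lap3d (fun t x y z => Real.cosh (kz * z) * F (x - V * t) y
        + (β * (Real.cos (K * z) * M - 1) / K ^ 2 - V) * y) =
      fun t x y z => (fun z => -K ^ 2 * Real.cosh (kz * z)) z * F (x - V * t) y
        + (fun z => -(β * M * Real.cos (K * z))) z * y := by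
    funext t x y z
    unfold lap3d
    rw [exx, eyy, ez, ezz]
    have h := hHelm (x - V * t) y
    simp only
    rw [hK]
    linear_combination Real.cosh (kz * z) * h
  constructor
  · intro t x y z
    unfold CO
    rw [el, aux_t hF, aux_x hF (fun z => -K ^ 2 * Real.cosh (kz * z)),
      aux_y hF (fun z => -K ^ 2 * Real.cosh (kz * z)), ex, ey]
    field_simp
    ring
  · intro t x y z
    unfold Bop
    rw [ez, ex, ey, aux_t hF (fun z => kz * Real.sinh (kz * z))
        (fun z => -(β * M / K * Real.sin (K * z))),
      aux_x hF (fun z => kz * Real.sinh (kz * z))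
        (fun z => -(β * M / K * Real.sin (K * z))),
      aux_y hF (fun z => kz * Real.sinh (kz * z))
        (fun z => -(β * M / K * Real.sin (K * z)))]
    field_simp
    ring
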